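/- arXiv:2109.07803 — 4 statements merged into one kernel-verified Lean document; each statement's English description precedes it below -/
import Mathlib

section
/- For every n : ℕ, let N be the number of ordered pairs (R₁, R₂) of transfer systems on the linear order Fin (n+1) (with lattice operations min and max) such that R₁ is contained in R₂ (i.e., R₁ x y implies R₂ x y for all x, y). Then (n+1)(n+2) · N = 2 · C(4n+5, n). (Such pairs correspond bijectively to premodel structures on [n], so there are 2/((n+1)(n+2)) · C(4n+5, n) premodel structures on [n].) -/
/-- A transfer system on a lattice `L`: a binary relation refining `≤`,
reflexive, transitive, and closed under restriction. -/
structure TransferSystem (L : Type*) [Lattice L] where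
  rel : L → L → Prop
  le_of_rel : ∀ x y, rel x y → x ≤ y
  refl : ∀ x, rel x x
  trans : ∀ x y z, rel x y → rel y z → rel x z
  restrict : ∀ x y z, rel x y → z ≤ y → rel (x ⊓ z) z

/-!
A transfer system on a chain is determined by the map sending `x` to the greatest element related
to it. Recording the lengths of these arcs gives the bracket vectors of the Tamari lattice, whose
order is inclusion of transfer systems, so nested pairs are Tamari intervals.

Cutting an interval after the first arc of its upper end splits it into two smaller intervals; what
remains to choose is a contact of the first one. Hence the generating function `F(t, x)`, with `x`
marking the contacts of the lower end, satisfies `F = x + t x F (F - F|ₓ₌₁) / (x - 1)`. This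
equation has only one power series solution, and it is solved by a rational parametrization
(Bousquet-Mélou, Fusy and Préville-Ratelle) in terms of the series `B = 1 + t B⁴`, in which
`F|ₓ₌₁ = 2 B² - B³`. The coefficients of the powers of `B` are Fuss–Catalan numbers.
-/

section AdicContraction

variable {R M : Type*} [CommRing R] {I : Ideal R} [AddCommGroup M] [Module R M] {Φ : M → M}

theorem iterate_smodEq_iterate_of_contracting
    (hΦ : ∀ n x y, x ≡ y [SMOD (I ^ n • ⊤ : Submodule R M)] →
      Φ x ≡ Φ y [SMOD (I ^ (n + 1) • ⊤ : Submodule R M)]) (n : ℕ) (x y : M) :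
    Φ^[n] x ≡ Φ^[n] y [SMOD (I ^ n • ⊤ : Submodule R M)] := by
  induction n with
  | zero => simp
  | succ n ih => simpa only [Function.iterate_succ_apply'] using hΦ n _ _ ih

theorem existsUnique_isFixedPt_of_contracting [IsAdicComplete I M]
    (hΦ : ∀ n x y, x ≡ y [SMOD (I ^ n • ⊤ : Submodule R M)] →
      Φ x ≡ Φ y [SMOD (I ^ (n + 1) • ⊤ : Submodule R M)]) :
    ∃! x, Function.IsFixedPt Φ x := by
  have iterate_close := iterate_smodEq_iterate_of_contracting hΦ
  have cauchy {m n : ℕ} (hmn : m ≤ n) :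
      Φ^[m] 0 ≡ Φ^[n] 0 [SMOD (I ^ m • ⊤ : Submodule R M)] := by
    rw [← Nat.add_sub_cancel' hmn, Function.iterate_add_apply]
    exact iterate_close m _ _
  obtain ⟨x, hx⟩ := IsPrecomplete.prec (I := I) inferInstance cauchy
  have fixed : Function.IsFixedPt Φ x := (IsHausdorff.eq_iff_smodEq (I := I)).2 fun n => by
    have h := hx (n + 1)
    rw [Function.iterate_succ_apply'] at h
    exact ((hΦ n _ _ (hx n)).symm.trans h).mono
      (Submodule.smul_mono_left (Ideal.pow_le_pow_right n.le_succ))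
  refine ⟨x, fixed, fun y hy => (IsHausdorff.eq_iff_smodEq (I := I)).2 fun n => ?_⟩
  simpa only [(hy.iterate n).eq, (fixed.iterate n).eq] using iterate_close n y x

theorem existsUnique_add_mul_pow_eq [IsAdicComplete I R]
    (a : R) {c : R} (hc : c ∈ I) (k : ℕ) :
    ∃! x, a + c * x ^ k = x := by
  refine existsUnique_isFixedPt_of_contracting (I := I) fun n x y hxy => ?_
  rw [smul_eq_mul, Ideal.mul_top, SModEq.sub_mem] at hxy ⊢
  have : a + c * x ^ k - (a + c * y ^ k) = c * (x ^ k - y ^ k) := by ring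
  rw [this, pow_succ']
  exact Ideal.mul_mem_mul hc (Ideal.mem_of_dvd _ (sub_dvd_pow_sub_pow x y k) hxy)

end AdicContraction

section FussCatalan

open PowerSeries

theorem succ_mul_coeff_succ_pow_of_eq {R : Type*} [CommRing R] [IsDomain R] [CharZero R] {p : ℕ}
    {B : R⟦X⟧} (hB : 1 + X * B ^ (p + 1) = B) (n r : ℕ) :
    ((n : R) + 1) * coeff (n + 1) (B ^ r) = r * ((p + 1) * n + p + r).choose n := by
  have pow_recurrence (n r : ℕ) : coeff (n + 1) (B ^ (r + 1)) =
      coeff (n + 1) (B ^ r) + coeff n (B ^ (r + (p + 1))) := by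
    have : B ^ (r + 1) = B ^ r + X * B ^ (r + (p + 1)) := by
      linear_combination -B ^ r * hB
    rw [this, map_add, coeff_succ_X_mul]
  have constantCoeff_B : constantCoeff B = 1 := by
    rw [← hB]; simp
  induction n generalizing r with
  | zero =>
    induction r with
    | zero => simp [coeff_one]
    | succ r ihr =>
      rw [pow_recurrence, mul_add, ihr]
      simp [constantCoeff_B]
  | succ n ihn =>
    induction r with
    | zero => simp [coeff_one]
    | succ r ihr =>
      set N := (p + 1) * (n + 1) + p + r with hN
      have shift : (p + 1) * n + p + (r + (p + 1)) = N := by ring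
      have pascal : ((N + 1).choose (n + 1) : R) = N.choose n + N.choose (n + 1) := by
        exact_mod_cast Nat.choose_succ_succ N n
      have absorption :
          (N.choose (n + 1) : R) * (n + 1) = N.choose n * (p * n + 2 * p + 1 + r) := by
        have := Nat.choose_succ_right_eq N n
        rw [show N - n = p * n + 2 * p + 1 + r by rw [hN]; ring_nf; omega] at this
        exact_mod_cast this
      have hn : (n : R) + 1 ≠ 0 := n.cast_add_one_ne_zero
      have ihn' := ihn (r + (p + 1))
      rw [shift] at ihn'
      rw [pow_recurrence, mul_add, ihr, ← add_assoc ((p + 1) * (n + 1) + p), pascal]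
      refine mul_left_cancel₀ hn ?_
      push_cast at ihn' ⊢
      linear_combination (n + 2 : R) * ihn' - absorption

theorem mul_coeff_two_mul_sq_sub_cube {R : Type*} [CommRing R] [IsDomain R] [CharZero R]
    {B : R⟦X⟧} (hB : 1 + X * B ^ 4 = B) (n : ℕ) :
    ((n : R) + 1) * (n + 2) * coeff (n + 1) (2 * B ^ 2 - B ^ 3) = 2 * (4 * n + 5).choose n := by
  have coeff_sq := succ_mul_coeff_succ_pow_of_eq hB n 2
  have coeff_cube := succ_mul_coeff_succ_pow_of_eq hB n 3
  have choose_succ :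
      ((4 * n + 5).choose n : R) * (4 * n + 6) = (4 * n + 6).choose n * (3 * n + 6) := by
    have := Nat.choose_mul_succ_eq (4 * n + 5) n
    rw [show 4 * n + 5 + 1 - n = 3 * n + 6 by omega] at this
    exact_mod_cast this
  rw [two_mul, map_sub, map_add]
  push_cast at coeff_sq coeff_cube
  linear_combination 2 * (n + 2 : R) * coeff_sq - (n + 2 : R) * coeff_cube + choose_succ

end FussCatalan

section CatalyticEquation

open PowerSeries

variable {R : Type*} [CommRing R]

/-- Evaluation of the catalytic variable at `1`, coefficientwise in the main variable. -/
noncomputable def specializeOne : (Polynomial R)⟦X⟧ →+* R⟦X⟧ :=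
  PowerSeries.map (Polynomial.evalRingHom 1)

/-- The equation `F = x + t x F (F - F|ₓ₌₁) / (x - 1)` with catalytic variable `x`, encoded as a
power series in `t` over `R[x]` and multiplied by `x - 1` to avoid the division. -/
def CatalyticEquation (F : (Polynomial R)⟦X⟧) : Prop :=
  (C Polynomial.X - 1) * F = (C Polynomial.X - 1) * C Polynomial.X +
    C Polynomial.X * (X * ((F - PowerSeries.map Polynomial.C (specializeOne F)) * F))

theorem specializeOne_map_C (f : R⟦X⟧) : specializeOne (PowerSeries.map Polynomial.C f) = f := by
  ext n; simp [specializeOne]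

theorem specializeOne_C_X : specializeOne (C Polynomial.X : (Polynomial R)⟦X⟧) = 1 := by
  simp [specializeOne]

theorem X_pow_dvd_of_X_pow_dvd_C_mul {a : R} (ha : IsLeftRegular a) {n : ℕ} {f : R⟦X⟧}
    (h : (X : R⟦X⟧) ^ n ∣ C a * f) : (X : R⟦X⟧) ^ n ∣ f :=
  X_pow_dvd_iff.2 fun i hi => ha.mul_left_eq_zero_iff.1
    (by simpa only [coeff_C_mul] using X_pow_dvd_iff.1 h i hi)

theorem CatalyticEquation.unique {F G : (Polynomial R)⟦X⟧} (hF : CatalyticEquation F)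
    (hG : CatalyticEquation G) : F = G := by
  let s : (Polynomial R)⟦X⟧ →+* (Polynomial R)⟦X⟧ :=
    (PowerSeries.map Polynomial.C).comp specializeOne
  have difference : C (Polynomial.X - 1) * (F - G) =
      X * (C Polynomial.X * ((F - G - s (F - G)) * F + (G - s G) * (F - G))) := by
    rw [map_sub s, map_sub C, map_one]
    unfold CatalyticEquation at hF hG
    change _ = _ + C Polynomial.X * (X * ((F - s F) * F)) at hF
    change _ = _ + C Polynomial.X * (X * ((G - s G) * G)) at hG
    linear_combination hF - hG
  have X_pow_dvd (n : ℕ) : X ^ n ∣ F - G := by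
    induction n with
    | zero => simp
    | succ n ih =>
      have ih_s : X ^ n ∣ s (F - G) := by simpa [s, specializeOne] using map_dvd s ih
      refine X_pow_dvd_of_X_pow_dvd_C_mul (Polynomial.monic_X_sub_C 1).isRegular.left ?_
      rw [map_one, difference, pow_succ']
      exact mul_dvd_mul_left _ (dvd_mul_of_dvd_right
        (dvd_add (dvd_mul_of_dvd_left (dvd_sub ih ih_s) _) (dvd_mul_of_dvd_right ih _)) _)
  ext1 n
  exact sub_eq_zero.1 ((map_sub _ F G).symm.trans
    (X_pow_dvd_iff.1 (X_pow_dvd (n + 1)) n n.lt_succ_self))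

-- At `x = w = 1` the candidate `F = b ((x (1 - z) - 1) w + 1 - z)` becomes `b (1 - 2 z)`, which is
-- therefore subtracted in the last term.
theorem catalytic_identity {t x z b w : R} (hw : 1 - z + x * z * w ^ 2 = w)
    (hb : b * (1 - z) ^ 3 = 1) (ht : t * b = z) :
    (x - 1) * (b * ((x * (1 - z) - 1) * w + 1 - z)) = (x - 1) * x +
      x * (t * ((b * ((x * (1 - z) - 1) * w + 1 - z) - b * (1 - 2 * z)) *
        (b * ((x * (1 - z) - 1) * w + 1 - z)))) := by
  linear_combination -b * (x * (1 - z) - 1) ^ 2 * hw + (x - 1) * x * hb -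
    x * b * ((x * (1 - z) - 1) * w + z) * ((x * (1 - z) - 1) * w + 1 - z) * ht

theorem exists_quadratic_series {Z : R⟦X⟧} (hZ : X ∣ Z) :
    ∃ W : (Polynomial R)⟦X⟧, specializeOne W = 1 ∧
      1 - PowerSeries.map Polynomial.C Z +
        C Polynomial.X * PowerSeries.map Polynomial.C Z * W ^ 2 = W := by
  have xZ_mem : C Polynomial.X * PowerSeries.map Polynomial.C Z ∈
      Ideal.span {(X : (Polynomial R)⟦X⟧)} :=
    Ideal.mul_mem_left _ _ (Ideal.mem_span_singleton.2
      (by simpa only [map_X] using map_dvd (PowerSeries.map Polynomial.C) hZ))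
  obtain ⟨W, hW, -⟩ := existsUnique_add_mul_pow_eq (1 - PowerSeries.map Polynomial.C Z) xZ_mem 2
  have specialize_hW : 1 - Z + Z * specializeOne W ^ 2 = specializeOne W := by
    simpa [specializeOne_map_C, specializeOne_C_X] using congrArg specializeOne hW
  exact ⟨W, (existsUnique_add_mul_pow_eq (1 - Z) (Ideal.mem_span_singleton.2 hZ) 2).unique
    specialize_hW (by ring), hW⟩

theorem exists_catalyticEquation {B : R⟦X⟧} (hB : 1 + X * B ^ 4 = B) :
    ∃ F, CatalyticEquation F ∧ specializeOne F = 2 * B ^ 2 - B ^ 3 := by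
  let ι : R⟦X⟧ →+* (Polynomial R)⟦X⟧ := PowerSeries.map Polynomial.C
  let Z : R⟦X⟧ := X * B ^ 3
  have hBZ : B * (1 - Z) = 1 := by linear_combination -hB
  obtain ⟨W, specialize_W, hW⟩ := exists_quadratic_series (dvd_mul_right X (B ^ 3))
  let F := ι B ^ 3 * ((C Polynomial.X * (1 - ι Z) - 1) * W + 1 - ι Z)
  have specialize_F : specializeOne F = B ^ 3 * (1 - 2 * Z) := by
    simp only [F, ι, map_add, map_sub, map_mul, map_pow, map_one, specializeOne_map_C,
      specializeOne_C_X, specialize_W]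
    ring
  have hb : ι B ^ 3 * (1 - ι Z) ^ 3 = 1 := by
    rw [← mul_pow, ← map_one ι, ← map_sub, ← map_mul, hBZ, map_one, one_pow]
  have ht : X * ι B ^ 3 = ι Z := by simp [Z, ι]
  refine ⟨F, ?_, by linear_combination specialize_F + 2 * B ^ 2 * hBZ⟩
  rw [CatalyticEquation, specialize_F, show PowerSeries.map Polynomial.C (B ^ 3 * (1 - 2 * Z)) =
    ι B ^ 3 * (1 - 2 * ι Z) by simp only [ι, map_mul, map_pow, map_sub, map_one, map_ofNat]]
  exact catalytic_identity hW hb ht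

theorem CatalyticEquation.mul_coeff_specializeOne [IsDomain R] [CharZero R]
    {F : (Polynomial R)⟦X⟧} (hF : CatalyticEquation F) (n : ℕ) :
    ((n : R) + 1) * (n + 2) * coeff (n + 1) (specializeOne F) = 2 * (4 * n + 5).choose n := by
  obtain ⟨B, hB, -⟩ := existsUnique_add_mul_pow_eq (1 : R⟦X⟧)
    (Ideal.mem_span_singleton_self (X : R⟦X⟧)) 4
  obtain ⟨G, hG, specialize_G⟩ := exists_catalyticEquation hB
  rw [hF.unique hG, specialize_G, mul_coeff_two_mul_sq_sub_cube hB]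

end CatalyticEquation

namespace TransferSystem

section Lattice

variable {L : Type*} [Lattice L]

theorem rel_injective : Function.Injective (rel : TransferSystem L → L → L → Prop) := by
  rintro ⟨⟩ ⟨⟩ rfl
  rfl

theorem rel_of_le_of_le (R : TransferSystem L) {x y z : L} (hxy : R.rel x y) (hxz : x ≤ z)
    (hzy : z ≤ y) : R.rel x z := by
  simpa only [inf_eq_left.2 hxz] using R.restrict x y z hxy hzy

end Lattice

section LinearOrder

variable {L : Type*} [LinearOrder L]

/-- The transfer system on a chain whose greatest element related to `x` is `u x`. -/
def ofReach (u : L → L) (hu : ∀ x, x ≤ u x) (hu' : ∀ x y, x ≤ y → y ≤ u x → u y ≤ u x) :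
    TransferSystem L where
  rel x y := x ≤ y ∧ y ≤ u x
  le_of_rel _ _ h := h.1
  refl x := ⟨le_rfl, hu x⟩
  trans x y _ hxy hyz := ⟨hxy.1.trans hyz.1, hyz.2.trans (hu' x y hxy.1 hxy.2)⟩
  restrict x y z hxy hzy := by
    rcases le_total x z with hxz | hzx
    · simpa only [inf_eq_left.2 hxz] using ⟨hxz, hzy.trans hxy.2⟩
    · simpa only [inf_eq_right.2 hzx] using ⟨le_rfl, hu z⟩

variable [Fintype L]

open Classical in
/-- The greatest element related to `x`; a transfer system on a finite chain is determined by
these elements. -/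
noncomputable def reach (R : TransferSystem L) (x : L) : L :=
  {y | R.rel x y}.toFinset.max' ⟨x, by simpa using R.refl x⟩

theorem rel_reach (R : TransferSystem L) (x : L) : R.rel x (R.reach x) := by
  classical
  exact Set.mem_toFinset.1 (Finset.max'_mem {y | R.rel x y}.toFinset _)

theorem le_reach_of_rel (R : TransferSystem L) {x y : L} (h : R.rel x y) : y ≤ R.reach x := by
  classical
  exact Finset.le_max' _ _ (by simpa using h)

theorem le_reach (R : TransferSystem L) (x : L) : x ≤ R.reach x :=
  R.le_reach_of_rel (R.refl x)

theorem rel_iff_le_reach (R : TransferSystem L) {x y : L} :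
    R.rel x y ↔ x ≤ y ∧ y ≤ R.reach x :=
  ⟨fun h => ⟨R.le_of_rel x y h, R.le_reach_of_rel h⟩,
    fun h => R.rel_of_le_of_le (R.rel_reach x) h.1 h.2⟩

theorem reach_le_reach (R : TransferSystem L) {x y : L} (hxy : x ≤ y) (hy : y ≤ R.reach x) :
    R.reach y ≤ R.reach x :=
  R.le_reach_of_rel (R.trans _ _ _ (R.rel_iff_le_reach.2 ⟨hxy, hy⟩) (R.rel_reach y))

theorem forall_rel_imp_iff_reach_le {R₁ R₂ : TransferSystem L} :
    (∀ x y, R₁.rel x y → R₂.rel x y) ↔ R₁.reach ≤ R₂.reach :=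
  ⟨fun h x => R₂.le_reach_of_rel (h _ _ (R₁.rel_reach x)), fun h x _ hxy =>
    R₂.rel_iff_le_reach.2 ⟨R₁.le_of_rel _ _ hxy, (R₁.le_reach_of_rel hxy).trans (h x)⟩⟩

theorem reach_injective : Function.Injective (reach : TransferSystem L → L → L) :=
  fun R₁ R₂ h => rel_injective <| by
    funext x y
    rw [rel_iff_le_reach, rel_iff_le_reach, h]

theorem reach_ofReach (u : L → L) (hu : ∀ x, x ≤ u x)
    (hu' : ∀ x y, x ≤ y → y ≤ u x → u y ≤ u x) : (ofReach u hu hu').reach = u :=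
  funext fun x => le_antisymm (rel_reach (ofReach u hu hu') x).2
    (le_reach_of_rel (ofReach u hu hu') ⟨hu x, le_rfl⟩)

end LinearOrder

end TransferSystem

section BracketVector

/-- The `v` for which the arcs from `i` to `i + l[i]` with `i < v` all stay below `v`. When `l` is
the bracket vector of a Dyck path, these mark the contacts of the path with its axis. -/
def contacts : List ℕ → Finset ℕ
  | [] => {0}
  | a :: l => insert 0 ({v ∈ contacts l | a ≤ v}.map (addRightEmbedding 1))

/-- Bracket vectors of the Tamari lattice: lists such that the arcs from `i` to `i + l[i]` stay
inside the list and do not cross. -/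
def IsBracketVector : List ℕ → Prop
  | [] => True
  | a :: l => a ∈ contacts l ∧ IsBracketVector l

theorem zero_mem_contacts (l : List ℕ) : 0 ∈ contacts l := by
  cases l <;> simp [contacts]

theorem succ_mem_contacts_cons {v a : ℕ} {l : List ℕ} :
    v + 1 ∈ contacts (a :: l) ↔ a ≤ v ∧ v ∈ contacts l := by
  simp [contacts, and_comm]

theorem mem_contacts_iff {v : ℕ} {l : List ℕ} :
    v ∈ contacts l ↔ v ≤ l.length ∧ ∀ i (hi : i < l.length), i < v → i + l[i] < v := by
  induction l generalizing v with
  | nil => simp [contacts]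
  | cons a l ih =>
    cases v with
    | zero => simp [zero_mem_contacts]
    | succ v =>
      rw [succ_mem_contacts_cons, ih]
      constructor
      · rintro ⟨ha, hv, h⟩
        refine ⟨by simpa using hv, fun i hi hiv => ?_⟩
        cases i <;> grind
      · rintro ⟨hv, h⟩
        refine ⟨?_, by simpa using hv, fun i hi hiv => ?_⟩
        · have := h 0
          grind
        · have := h (i + 1)
          grind

theorem le_length_of_mem_contacts {v : ℕ} {l : List ℕ} (h : v ∈ contacts l) : v ≤ l.length :=
  (mem_contacts_iff.1 h).1

theorem isBracketVector_iff {l : List ℕ} :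
    IsBracketVector l ↔ ∀ i (hi : i < l.length), i + l[i] < l.length ∧
      ∀ j (hj : j < l.length), i ≤ j → j ≤ i + l[i] → j + l[j] ≤ i + l[i] := by
  induction l with
  | nil => simp [IsBracketVector]
  | cons a l ih =>
    rw [IsBracketVector, ih, mem_contacts_iff]
    constructor
    · rintro ⟨⟨ha, hc⟩, h⟩ i hi
      cases i with
      | zero =>
        refine ⟨by simpa using Nat.lt_succ_of_le ha, fun j hj _ hja => ?_⟩
        cases j <;> grind
      | succ i =>
        have h_tail := h i (by simpa using hi)
        refine ⟨by simpa [Nat.succ_add] using h_tail.1, fun j hj hij hja => ?_⟩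
        cases j with
        | zero => simp at hij
        | succ j =>
          simpa [Nat.succ_add] using
            h_tail.2 j (by simpa using hj) (by simpa using hij) (by simpa [Nat.succ_add] using hja)
    · intro h
      have h_head := h 0
      have h_tail := fun i => h (i + 1)
      refine ⟨⟨by grind, fun i hi hia => ?_⟩, fun i hi => ⟨by grind, fun j hj hij hji => ?_⟩⟩
      · have := (h_head (by simp)).2 (i + 1)
        grind
      · have := (h_tail i (by simpa using hi)).2 (j + 1)
        grind

theorem contacts_subset_contacts_of_forall₂_le {l₁ l₂ : List ℕ}
    (h : List.Forall₂ (· ≤ ·) l₁ l₂) : contacts l₂ ⊆ contacts l₁ := by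
  intro v hv
  obtain ⟨hlen, hle⟩ := List.forall₂_iff_get.1 h
  simp only [List.get_eq_getElem, mem_contacts_iff] at hle hv ⊢
  exact ⟨hlen ▸ hv.1, fun i hi hiv =>
    (Nat.add_le_add_left (hle i hi (hlen ▸ hi)) i).trans_lt (hv.2 i (hlen ▸ hi) hiv)⟩

theorem mem_contacts_append_of_le {v : ℕ} {l₁ : List ℕ} (l₂ : List ℕ) (hv : v ≤ l₁.length) :
    v ∈ contacts (l₁ ++ l₂) ↔ v ∈ contacts l₁ := by
  induction l₁ generalizing v with
  | nil => simp [Nat.le_zero.1 hv, zero_mem_contacts]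
  | cons a l₁ ih =>
    cases v with
    | zero => simp [zero_mem_contacts]
    | succ v => simp [succ_mem_contacts_cons, ih (Nat.le_of_succ_le_succ hv)]

theorem length_add_mem_contacts_append {v : ℕ} {l₁ : List ℕ} (l₂ : List ℕ)
    (h₁ : l₁.length ∈ contacts l₁) : l₁.length + v ∈ contacts (l₁ ++ l₂) ↔ v ∈ contacts l₂ := by
  induction l₁ with
  | nil => simp
  | cons a l₁ ih =>
    rw [List.length_cons, succ_mem_contacts_cons] at h₁
    rw [List.length_cons, Nat.add_right_comm, List.cons_append, succ_mem_contacts_cons, ih h₁.2,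
      and_iff_right (h₁.1.trans (Nat.le_add_right _ _))]

theorem contacts_append {l₁ : List ℕ} (l₂ : List ℕ) (h₁ : l₁.length ∈ contacts l₁) :
    contacts (l₁ ++ l₂) = contacts l₁ ∪ (contacts l₂).map (addLeftEmbedding l₁.length) := by
  ext v
  simp only [Finset.mem_union, Finset.mem_map, addLeftEmbedding_apply]
  constructor
  · intro hv
    rcases le_total v l₁.length with hle | hle
    · exact Or.inl ((mem_contacts_append_of_le l₂ hle).1 hv)
    · obtain ⟨k, rfl⟩ := Nat.exists_eq_add_of_le hle
      exact Or.inr ⟨k, (length_add_mem_contacts_append l₂ h₁).1 hv, rfl⟩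
  · rintro (hv | ⟨k, hk, rfl⟩)
    · exact (mem_contacts_append_of_le l₂ (le_length_of_mem_contacts hv)).2 hv
    · exact (length_add_mem_contacts_append l₂ h₁).2 hk

theorem card_contacts_cons (a : ℕ) (l : List ℕ) :
    (contacts (a :: l)).card = {v ∈ contacts l | a ≤ v}.card + 1 := by
  rw [contacts, Finset.card_insert_of_notMem (by simp), Finset.card_map]

theorem card_filter_contacts_append {a : ℕ} {l₁ : List ℕ} (l₂ : List ℕ) (ha : a ≤ l₁.length)
    (h₁ : l₁.length ∈ contacts l₁) :
    {v ∈ contacts (l₁ ++ l₂) | a ≤ v}.card + 1 =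
      {v ∈ contacts l₁ | a ≤ v}.card + (contacts l₂).card := by
  set shifted := (contacts l₂).map (addLeftEmbedding l₁.length) with shifted_def
  have filter_shifted : {v ∈ shifted | a ≤ v} = shifted := by
    simp only [shifted_def, Finset.filter_eq_self, Finset.mem_map, addLeftEmbedding_apply]
    rintro _ ⟨k, -, rfl⟩
    exact ha.trans (Nat.le_add_right _ _)
  have inter_shifted : {v ∈ contacts l₁ | a ≤ v} ∩ shifted = {l₁.length} := by
    ext v
    simp only [shifted_def, Finset.mem_filter, Finset.mem_inter, Finset.mem_map,
      Finset.mem_singleton, addLeftEmbedding_apply]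
    constructor
    · rintro ⟨⟨hv, -⟩, k, -, rfl⟩
      exact le_antisymm (le_length_of_mem_contacts hv) (Nat.le_add_right _ _)
    · rintro rfl
      exact ⟨⟨h₁, ha⟩, 0, zero_mem_contacts l₂, rfl⟩
  rw [contacts_append l₂ h₁, Finset.filter_union, filter_shifted,
    ← Finset.card_singleton l₁.length, ← inter_shifted, Finset.card_union_add_card_inter,
    Finset.card_map]

theorem IsBracketVector.length_mem_contacts {l : List ℕ} (h : IsBracketVector l) :
    l.length ∈ contacts l := by
  induction l with
  | nil => exact zero_mem_contacts []
  | cons a l ih => exact succ_mem_contacts_cons.2 ⟨le_length_of_mem_contacts h.1, ih h.2⟩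

theorem isBracketVector_append {l₁ l₂ : List ℕ} (h₁ : l₁.length ∈ contacts l₁) :
    IsBracketVector (l₁ ++ l₂) ↔ IsBracketVector l₁ ∧ IsBracketVector l₂ := by
  induction l₁ with
  | nil => simp [IsBracketVector]
  | cons a l₁ ih =>
    rw [List.length_cons, succ_mem_contacts_cons] at h₁
    rw [List.cons_append, IsBracketVector, IsBracketVector, ih h₁.2,
      mem_contacts_append_of_le l₂ h₁.1, and_assoc]

end BracketVector

section BracketInterval

/-- Intervals of the Tamari lattice, each encoded as the list of pairs of entries of the bracket
vectors of its two ends. -/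
def IsBracketInterval (l : List (ℕ × ℕ)) : Prop :=
  IsBracketVector (l.map Prod.fst) ∧ IsBracketVector (l.map Prod.snd) ∧ ∀ a ∈ l, a.1 ≤ a.2

/-- The bracket intervals of length `m`, generated by prepending pairs of arc lengths. -/
def bracketIntervals : ℕ → Finset (List (ℕ × ℕ))
  | 0 => {[]}
  | m + 1 => (bracketIntervals m).biUnion fun l =>
      {a ∈ contacts (l.map Prod.fst) ×ˢ contacts (l.map Prod.snd) | a.1 ≤ a.2}.image (· :: l)

theorem isBracketInterval_cons {a : ℕ × ℕ} {l : List (ℕ × ℕ)} :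
    IsBracketInterval (a :: l) ↔ a.1 ∈ contacts (l.map Prod.fst) ∧
      a.2 ∈ contacts (l.map Prod.snd) ∧ a.1 ≤ a.2 ∧ IsBracketInterval l := by
  simp only [IsBracketInterval, List.map_cons, IsBracketVector, List.forall_mem_cons]
  tauto

theorem isBracketInterval_zip {l₁ l₂ : List ℕ} (h : l₁.length = l₂.length) :
    IsBracketInterval (l₁.zip l₂) ↔
      IsBracketVector l₁ ∧ IsBracketVector l₂ ∧ List.Forall₂ (· ≤ ·) l₁ l₂ := by
  simp [IsBracketInterval, List.map_fst_zip h.le, List.map_snd_zip h.ge, List.forall₂_iff_zip, h]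

theorem mem_bracketIntervals {m : ℕ} {l : List (ℕ × ℕ)} :
    l ∈ bracketIntervals m ↔ l.length = m ∧ IsBracketInterval l := by
  induction m generalizing l with
  | zero =>
    simp only [bracketIntervals, Finset.mem_singleton, List.length_eq_zero_iff, iff_self_and]
    rintro rfl
    simp [IsBracketInterval, IsBracketVector]
  | succ m ih =>
    cases l with
    | nil => simp [bracketIntervals]
    | cons a l =>
      simp only [bracketIntervals, Finset.mem_biUnion, Finset.mem_image, Finset.mem_filter,
        Finset.mem_product, ih, List.cons.injEq, List.length_cons, Nat.succ_inj,
        isBracketInterval_cons]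
      grind

theorem IsBracketInterval.contacts_snd_subset {l : List (ℕ × ℕ)} (h : IsBracketInterval l) :
    contacts (l.map Prod.snd) ⊆ contacts (l.map Prod.fst) :=
  contacts_subset_contacts_of_forall₂_le (by simpa using h.2.2)

theorem isBracketInterval_append {l₁ l₂ : List (ℕ × ℕ)}
    (h₁ : l₁.length ∈ contacts (l₁.map Prod.fst)) (h₂ : l₁.length ∈ contacts (l₁.map Prod.snd)) :
    IsBracketInterval (l₁ ++ l₂) ↔ IsBracketInterval l₁ ∧ IsBracketInterval l₂ := by
  rw [IsBracketInterval, List.map_append, List.map_append,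
    isBracketVector_append (by simpa using h₁), isBracketVector_append (by simpa using h₂),
    List.forall_mem_append]
  simp only [IsBracketInterval]
  tauto

theorem isBracketInterval_cons_append {v : ℕ} {l₁ l₂ : List (ℕ × ℕ)} :
    IsBracketInterval ((v, l₁.length) :: (l₁ ++ l₂)) ↔
      IsBracketInterval l₁ ∧ IsBracketInterval l₂ ∧ v ∈ contacts (l₁.map Prod.fst) := by
  have mem_append_iff (f : ℕ × ℕ → ℕ) {w : ℕ} (hw : w ≤ l₁.length) :
      w ∈ contacts ((l₁ ++ l₂).map f) ↔ w ∈ contacts (l₁.map f) := by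
    rw [List.map_append, mem_contacts_append_of_le _ (by simpa using hw)]
  rw [isBracketInterval_cons, mem_append_iff _ le_rfl]
  constructor
  · rintro ⟨hv, hlen, hle, h⟩
    have hlen' := h.contacts_snd_subset ((mem_append_iff _ le_rfl).2 hlen)
    rw [mem_append_iff _ le_rfl] at hlen'
    obtain ⟨h₁, h₂⟩ := (isBracketInterval_append hlen' hlen).1 h
    exact ⟨h₁, h₂, (mem_append_iff _ hle).1 hv⟩
  · rintro ⟨h₁, h₂, hv⟩
    have hle : v ≤ l₁.length := by simpa using le_length_of_mem_contacts hv
    have hlen : l₁.length ∈ contacts (l₁.map Prod.snd) := by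
      simpa using h₁.2.1.length_mem_contacts
    exact ⟨(mem_append_iff _ hle).2 hv, hlen, hle,
      (isBracketInterval_append (h₁.contacts_snd_subset hlen) hlen).2 ⟨h₁, h₂⟩⟩

theorem sum_bracketIntervals_succ {A : Type*} [AddCommMonoid A] (f : List (ℕ × ℕ) → A) (m : ℕ) :
    ∑ l ∈ bracketIntervals (m + 1), f l =
      ∑ p ∈ Finset.HasAntidiagonal.antidiagonal m,
        ∑ l₁ ∈ bracketIntervals p.1, ∑ l₂ ∈ bracketIntervals p.2,
          ∑ v ∈ contacts (l₁.map Prod.fst), f ((v, p.1) :: (l₁ ++ l₂)) := by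
  simp only [Finset.sum_sigma']
  symm
  refine Finset.sum_bij (fun q _ => (q.2.2.2, q.1.1) :: (q.2.1 ++ q.2.2.1)) ?_ ?_ ?_
    (fun _ _ => rfl)
  · rintro ⟨⟨w, r⟩, l₁, l₂, v⟩ hq
    simp only [Finset.mem_sigma, Finset.HasAntidiagonal.mem_antidiagonal, mem_bracketIntervals]
      at hq ⊢
    obtain ⟨rfl, ⟨rfl, h₁⟩, ⟨rfl, h₂⟩, hv⟩ := hq
    exact ⟨by simp, isBracketInterval_cons_append.2 ⟨h₁, h₂, hv⟩⟩
  · rintro ⟨⟨w, r⟩, l₁, l₂, v⟩ hq ⟨⟨w', r'⟩, l₁', l₂', v'⟩ hq' heq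
    simp only [Finset.mem_sigma, mem_bracketIntervals] at hq hq'
    obtain ⟨-, ⟨rfl, -⟩, ⟨rfl, -⟩, -⟩ := hq
    obtain ⟨-, ⟨rfl, -⟩, ⟨rfl, -⟩, -⟩ := hq'
    simp only [List.cons.injEq, Prod.mk.injEq] at heq
    obtain ⟨⟨rfl, hlen⟩, happ⟩ := heq
    obtain ⟨rfl, rfl⟩ := List.append_inj happ hlen
    rfl
  · intro l h
    obtain ⟨hlen, hl⟩ := mem_bracketIntervals.1 h
    obtain ⟨⟨v, w⟩, l, rfl⟩ := List.exists_cons_of_length_eq_add_one hlen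
    have hw : w ≤ l.length := by
      simpa using le_length_of_mem_contacts (isBracketInterval_cons.1 hl).2.1
    obtain ⟨l₁, l₂, rfl, rfl⟩ : ∃ l₁ l₂, l = l₁ ++ l₂ ∧ w = l₁.length :=
      ⟨l.take w, l.drop w, (List.take_append_drop w l).symm, by simpa using hw⟩
    obtain ⟨h₁, h₂, hv⟩ := isBracketInterval_cons_append.1 hl
    refine ⟨⟨(l₁.length, l₂.length), l₁, l₂, v⟩, ?_, rfl⟩
    simp only [Finset.mem_sigma, Finset.HasAntidiagonal.mem_antidiagonal, mem_bracketIntervals]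
    exact ⟨by simpa using hlen, ⟨trivial, h₁⟩, ⟨trivial, h₂⟩, hv⟩

end BracketInterval

namespace TransferSystem

variable {m : ℕ}

/-- The bracket vector of a transfer system on a chain, with an arc from every element to the
greatest element related to it. -/
noncomputable def bracketVector (R : TransferSystem (Fin m)) : List ℕ :=
  List.ofFn fun x => (R.reach x - x : ℕ)

theorem length_bracketVector (R : TransferSystem (Fin m)) : R.bracketVector.length = m :=
  List.length_ofFn

theorem add_getElem_bracketVector (R : TransferSystem (Fin m)) (x : Fin m) :
    x + R.bracketVector[(x : ℕ)]'(R.length_bracketVector.symm ▸ x.2) = (R.reach x : ℕ) := by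
  simpa [bracketVector] using Nat.add_sub_cancel' (R.le_reach x)

theorem isBracketVector_bracketVector (R : TransferSystem (Fin m)) :
    IsBracketVector R.bracketVector := by
  refine isBracketVector_iff.2 fun i hi => ?_
  have hi' : i < m := R.length_bracketVector ▸ hi
  rw [R.add_getElem_bracketVector ⟨i, hi'⟩]
  refine ⟨R.length_bracketVector.symm ▸ (R.reach _).2, fun j hj hij hji => ?_⟩
  have hj' : j < m := R.length_bracketVector ▸ hj
  rw [R.add_getElem_bracketVector ⟨j, hj'⟩]
  exact R.reach_le_reach hij hji

theorem forall₂_bracketVector_le_iff {R₁ R₂ : TransferSystem (Fin m)} :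
    List.Forall₂ (· ≤ ·) R₁.bracketVector R₂.bracketVector ↔ R₁.reach ≤ R₂.reach := by
  have le_iff (x : Fin m) : (R₁.reach x - x : ℕ) ≤ R₂.reach x - x ↔ R₁.reach x ≤ R₂.reach x :=
    tsub_le_tsub_iff_right (R₂.le_reach x)
  simp [List.forall₂_iff_get, bracketVector, Pi.le_def, Fin.forall_iff, ← le_iff]

theorem bracketVector_injective :
    Function.Injective (bracketVector : TransferSystem (Fin m) → List ℕ) := fun _ _ h =>
  reach_injective (le_antisymm (forall₂_bracketVector_le_iff.1 (h ▸ List.forall₂_refl _))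
    (forall₂_bracketVector_le_iff.1 (h ▸ List.forall₂_refl _)))

theorem exists_bracketVector_eq {l : List ℕ} (hl : l.length = m) (h : IsBracketVector l) :
    ∃ R : TransferSystem (Fin m), R.bracketVector = l := by
  subst hl
  rw [isBracketVector_iff] at h
  refine ⟨ofReach (fun x => ⟨x + l[x], (h x x.2).1⟩) (fun x => Nat.le_add_right _ _)
    (fun x y => (h x x.2).2 y y.2), ?_⟩
  simp [bracketVector, reach_ofReach]

theorem card_nested_pairs_eq_card_bracketIntervals (m : ℕ) :
    Nat.card {p : TransferSystem (Fin m) × TransferSystem (Fin m) //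
      ∀ x y, p.1.rel x y → p.2.rel x y} = (bracketIntervals m).card := by
  have length_eq (R₁ R₂ : TransferSystem (Fin m)) :
      R₁.bracketVector.length = R₂.bracketVector.length := by simp only [length_bracketVector]
  have zip_mem_iff {R₁ R₂ : TransferSystem (Fin m)} :
      R₁.bracketVector.zip R₂.bracketVector ∈ bracketIntervals m ↔
        ∀ x y, R₁.rel x y → R₂.rel x y := by
    simp [mem_bracketIntervals, isBracketInterval_zip (length_eq R₁ R₂), length_bracketVector,
      isBracketVector_bracketVector, forall₂_bracketVector_le_iff, forall_rel_imp_iff_reach_le]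
  rw [← Nat.card_eq_finsetCard]
  refine Nat.card_eq_of_bijective
    (fun p => ⟨p.1.1.bracketVector.zip p.1.2.bracketVector, zip_mem_iff.2 p.2⟩) ⟨?_, ?_⟩
  · rintro ⟨⟨R₁, R₂⟩, hR⟩ ⟨⟨S₁, S₂⟩, hS⟩ h
    have h_zip := congrArg Subtype.val h
    have h₁ := congrArg (List.map Prod.fst) h_zip
    have h₂ := congrArg (List.map Prod.snd) h_zip
    simp only [List.map_fst_zip (length_eq _ _).le] at h₁
    simp only [List.map_snd_zip (length_eq _ _).le] at h₂
    obtain rfl := bracketVector_injective h₁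
    obtain rfl := bracketVector_injective h₂
    rfl
  · rintro ⟨l, hl⟩
    obtain ⟨hlen, h₁, h₂, -⟩ := mem_bracketIntervals.1 hl
    obtain ⟨R₁, hR₁⟩ := exists_bracketVector_eq (by simpa using hlen) h₁
    obtain ⟨R₂, hR₂⟩ := exists_bracketVector_eq (by simpa using hlen) h₂
    have zip_eq : R₁.bracketVector.zip R₂.bracketVector = l := by
      rw [hR₁, hR₂, ← List.unzip_fst, ← List.unzip_snd, List.zip_unzip]
    exact ⟨⟨(R₁, R₂), zip_mem_iff.1 (zip_eq ▸ hl)⟩, Subtype.ext zip_eq⟩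

end TransferSystem

section ContactPolynomial

open Polynomial

theorem sub_one_mul_sum_pow_card_filter_le {A ι : Type*} [CommRing A] [LinearOrder ι] (x : A)
    (s : Finset ι) : (x - 1) * ∑ a ∈ s, x ^ {b ∈ s | a ≤ b}.card = x * (x ^ s.card - 1) := by
  induction s using Finset.induction_on_min with
  | empty => simp
  | insert a s a_lt ih =>
    have ha : a ∉ s := fun h => (a_lt a h).false
    have filter_min : {b ∈ insert a s | a ≤ b} = insert a s :=
      Finset.filter_true_of_mem (by simpa using fun b hb => (a_lt b hb).le)
    have sum_tail : ∑ b ∈ s, x ^ {c ∈ insert a s | b ≤ c}.card =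
        ∑ b ∈ s, x ^ {c ∈ s | b ≤ c}.card :=
      Finset.sum_congr rfl fun b hb => by
        rw [Finset.filter_insert, if_neg (a_lt b hb).not_ge]
    rw [Finset.sum_insert ha, filter_min, sum_tail, mul_add, ih, Finset.card_insert_of_notMem ha]
    ring

/-- The enumerator of the bracket intervals of length `m` by the number of contacts of their lower
end; the catalytic variable is `X`. -/
noncomputable def contactPolynomial (m : ℕ) : ℤ[X] :=
  ∑ l ∈ bracketIntervals m, X ^ (contacts (l.map Prod.fst)).card

theorem contactPolynomial_zero : contactPolynomial 0 = X := by
  simp [contactPolynomial, bracketIntervals, contacts]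

theorem eval_one_contactPolynomial (m : ℕ) :
    (contactPolynomial m).eval 1 = (bracketIntervals m).card := by
  simp [contactPolynomial, eval_finsetSum]

theorem sub_one_mul_sum_pow_card_contacts_cons_append {A : Type*} [CommRing A] (x : A)
    {l₁ : List ℕ} (l₂ : List ℕ) (h₁ : l₁.length ∈ contacts l₁) :
    (x - 1) * ∑ v ∈ contacts l₁, x ^ (contacts (v :: (l₁ ++ l₂))).card =
      x * ((x ^ (contacts l₁).card - 1) * x ^ (contacts l₂).card) := by
  rw [← mul_assoc, ← sub_one_mul_sum_pow_card_filter_le, mul_assoc, Finset.sum_mul]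
  congr 1
  refine Finset.sum_congr rfl fun v hv => ?_
  rw [card_contacts_cons, card_filter_contacts_append l₂ (le_length_of_mem_contacts hv) h₁,
    pow_add]

theorem sub_one_mul_contactPolynomial_succ (m : ℕ) :
    (X - 1) * contactPolynomial (m + 1) =
      X * ∑ p ∈ Finset.HasAntidiagonal.antidiagonal m,
        (contactPolynomial p.1 - C ((contactPolynomial p.1).eval 1)) * contactPolynomial p.2 := by
  have sub_eval_one (k : ℕ) : contactPolynomial k - C ((contactPolynomial k).eval 1) =
      ∑ l ∈ bracketIntervals k, ((X : ℤ[X]) ^ (contacts (l.map Prod.fst)).card - 1) := by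
    rw [eval_one_contactPolynomial, contactPolynomial, Finset.sum_sub_distrib]
    simp
  rw [contactPolynomial, sum_bracketIntervals_succ, Finset.mul_sum, Finset.mul_sum]
  refine Finset.sum_congr rfl fun p _ => ?_
  rw [sub_eval_one, contactPolynomial, Finset.sum_mul_sum, Finset.mul_sum, Finset.mul_sum]
  refine Finset.sum_congr rfl fun l₁ hl₁ => ?_
  rw [Finset.mul_sum, Finset.mul_sum]
  refine Finset.sum_congr rfl fun l₂ _ => ?_
  simp only [List.map_cons, List.map_append]
  exact sub_one_mul_sum_pow_card_contacts_cons_append X _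
    (mem_bracketIntervals.1 hl₁).2.1.length_mem_contacts

theorem catalyticEquation_contactPolynomial :
    CatalyticEquation (PowerSeries.mk contactPolynomial) := by
  ext1 n
  rw [show (PowerSeries.C X - 1 : PowerSeries ℤ[X]) = PowerSeries.C (X - 1) by simp, map_add,
    PowerSeries.coeff_C_mul, PowerSeries.coeff_C_mul,
    PowerSeries.coeff_C_mul n (PowerSeries.X * _), PowerSeries.coeff_mk]
  cases n with
  | zero => simp [contactPolynomial_zero]
  | succ n =>
    rw [PowerSeries.coeff_succ_X_mul, PowerSeries.coeff_mul, sub_one_mul_contactPolynomial_succ,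
      PowerSeries.coeff_succ_C, mul_zero, zero_add]
    simp [specializeOne]

end ContactPolynomial

/-- If `N` is the number of ordered pairs `(R₁, R₂)` of transfer systems on
`Fin (n+1)` with `R₁` contained in `R₂` (these correspond bijectively to
premodel structures on `[n]`), then `(n+1)(n+2) * N = 2 * C(4n+5, n)`. -/
theorem card_nested_pairs_of_transfer_systems (n : ℕ) :
    (n + 1) * (n + 2) *
      Nat.card {p : TransferSystem (Fin (n + 1)) × TransferSystem (Fin (n + 1)) //
        ∀ x y, p.1.rel x y → p.2.rel x y} =
      2 * Nat.choose (4 * n + 5) n := by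
  have h := catalyticEquation_contactPolynomial.mul_coeff_specializeOne n
  rw [specializeOne, PowerSeries.coeff_map, PowerSeries.coeff_mk, Polynomial.coe_evalRingHom,
    eval_one_contactPolynomial] at h
  rw [TransferSystem.card_nested_pairs_eq_card_bracketIntervals]
  exact_mod_cast h
end

section
/- Define real sequences Q(n) = C(2n+1, n) and P(n) = (2 / ((n+1)(n+2))) · C(4n+5, n) (the numbers of Quillen model structures and of premodel structures on [n], respectively). Then Q(n)/P(n) ~ c · 2^{d·n} · n² as n → ∞, i.e., the sequence (Q(n)/P(n)) / (c · 2^{d·n} · n²) tends to 1, where c = 243·√(3/2)/1024 and d = 3·log₂(3) − 6. -/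
/-!
Stirling's formula gives `C((a+b)n, an) ~ √((a+b)/(2ab)) / √(πn) * ((a+b)^(a+b) / (a^a b^b))^n`.
Raising the upper index from `(a+b)n + r` to `(a+b)n + r + 1` multiplies `C((a+b)n + r, an)` by
`((a+b)n + r + 1) / (bn + r + 1)`, which tends to `(a+b)/b`, so a shift by `r` contributes the
factor `((a+b)/b)^r`. For `Q` take `a = b = r = 1`; for `P` take `a = 1`, `b = 3`, `r = 5`. In the
quotient the factors `√(πn)` cancel, and the exponential rate is `4 / (256/27) = 27/64 = 2^d`.
-/

open Asymptotics Filter Real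

section Choose

variable {a b : ℕ}

lemma isEquivalent_factorial_mul (ha : a ≠ 0) :
    (fun n : ℕ ↦ ((a * n).factorial : ℝ)) ~[atTop]
      fun n ↦ √(2 * (a * n) * π) * (a * n / exp 1) ^ (a * n) := by
  simpa only [Function.comp_def, id, Nat.cast_mul] using
    Stirling.factorial_isEquivalent_stirling.comp_tendsto
      (tendsto_id.const_mul_atTop' (Nat.pos_of_ne_zero ha))

lemma sqrt_two_mul_mul_pi_div {x y t : ℝ} (hx : 0 < x) (hy : 0 < y) (ht : 0 < t) :
    √(2 * ((x + y) * t) * π) / (√(2 * (x * t) * π) * √(2 * (y * t) * π)) =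
      √((x + y) / (2 * x * y)) / √(π * t) := by
  rw [← sqrt_mul (by positivity), ← sqrt_div (by positivity), ← sqrt_div (by positivity)]
  congr 1
  field_simp

lemma mul_pow_div_mul_pow_mul_mul_pow {K : Type*} [CommGroupWithZero K] {x : K} (hx : x ≠ 0)
    (u v w : K) (a b n : ℕ) :
    (w * x) ^ ((a + b) * n) / ((u * x) ^ (a * n) * (v * x) ^ (b * n)) =
      (w ^ (a + b) / (u ^ a * v ^ b)) ^ n := by
  rw [pow_mul, pow_mul, pow_mul, ← mul_pow, ← div_pow, mul_pow, mul_pow, mul_pow,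
    mul_mul_mul_comm, ← pow_add, mul_div_mul_right _ _ (pow_ne_zero _ hx)]

lemma isEquivalent_choose_add_mul (ha : a ≠ 0) (hb : b ≠ 0) :
    (fun n : ℕ ↦ (((a + b) * n).choose (a * n) : ℝ)) ~[atTop]
      fun n ↦ √((a + b) / (2 * a * b)) / √(π * n) * ((a + b) ^ (a + b) / (a ^ a * b ^ b)) ^ n := by
  have hstirling := (isEquivalent_factorial_mul (a := a + b) (by lia)).div
    ((isEquivalent_factorial_mul ha).mul (isEquivalent_factorial_mul hb))
  refine (hstirling.congr_left (.of_forall fun n ↦ ?_)).congr_right ?_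
  · simp [add_mul, Nat.cast_add_choose]
  filter_upwards [eventually_ne_atTop 0] with n hn
  have hpow : ((a + b) * n / exp 1) ^ ((a + b) * n) /
      ((a * n / exp 1) ^ (a * n) * (b * n / exp 1) ^ (b * n)) =
        ((a + b : ℝ) ^ (a + b) / (a ^ a * b ^ b)) ^ n := by
    simp only [mul_div_assoc]
    exact mul_pow_div_mul_pow_mul_mul_pow (by positivity) _ _ _ _ _ _
  simp only [Pi.div_apply, Pi.mul_apply, Nat.cast_add]
  rw [mul_mul_mul_comm, mul_div_mul_comm, hpow,
    sqrt_two_mul_mul_pi_div (by positivity) (by positivity) (by positivity)]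

lemma cast_choose_add_mul_add_succ (a b r n : ℕ) :
    (((a + b) * n + (r + 1)).choose (a * n) : ℝ) =
      (r + 1 + (a + b) * n) / (r + 1 + b * n) * ((a + b) * n + r).choose (a * n) := by
  have h := Nat.choose_mul_succ_eq ((a + b) * n + r) (a * n)
  rw [show (a + b) * n + r + 1 - a * n = b * n + r + 1 by lia] at h
  have hcast : (((a + b) * n + r).choose (a * n) : ℝ) * ((a + b) * n + r + 1) =
      ((a + b) * n + r + 1).choose (a * n) * (b * n + r + 1) := mod_cast h
  rw [div_mul_eq_mul_div, eq_div_iff (by positivity), ← add_assoc]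
  linear_combination -hcast

lemma isEquivalent_choose_add_mul_shift (a : ℕ) (hb : b ≠ 0) (r : ℕ) :
    (fun n : ℕ ↦ (((a + b) * n + r).choose (a * n) : ℝ)) ~[atTop]
      fun n ↦ ((a + b) / b : ℝ) ^ r * ((a + b) * n).choose (a * n) := by
  induction r with
  | zero => simpa using IsEquivalent.refl
  | succ r ih =>
    have hratio : (fun n : ℕ ↦ (r + 1 + (a + b) * n : ℝ) / (r + 1 + b * n)) ~[atTop]
        fun _ ↦ ((a + b) / b : ℝ) :=
      (isEquivalent_const_iff_tendsto (by positivity)).2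
        (tendsto_add_mul_div_add_mul_atTop_nhds _ _ _ (by positivity))
    simp only [cast_choose_add_mul_add_succ, pow_succ', mul_assoc]
    exact hratio.mul ih

lemma isEquivalent_choose_add_mul_add (ha : a ≠ 0) (hb : b ≠ 0) (r : ℕ) :
    (fun n : ℕ ↦ (((a + b) * n + r).choose (a * n) : ℝ)) ~[atTop]
      fun n ↦ ((a + b) / b) ^ r *
        (√((a + b) / (2 * a * b)) / √(π * n) * ((a + b) ^ (a + b) / (a ^ a * b ^ b)) ^ n) :=
  (isEquivalent_choose_add_mul_shift a hb r).trans
    (IsEquivalent.refl.mul (isEquivalent_choose_add_mul ha hb))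

end Choose

lemma isEquivalent_choose_two_mul_add_one :
    (fun n : ℕ ↦ ((2 * n + 1).choose n : ℝ)) ~[atTop] fun n ↦ 2 * (1 / √(π * n) * 4 ^ n) := by
  convert! isEquivalent_choose_add_mul_add one_ne_zero one_ne_zero 1 using 3 <;> norm_num

lemma isEquivalent_choose_four_mul_add_five :
    (fun n : ℕ ↦ ((4 * n + 5).choose n : ℝ)) ~[atTop]
      fun n ↦ (4 / 3) ^ 5 * (√(2 / 3) / √(π * n) * (256 / 27) ^ n) := by
  convert! isEquivalent_choose_add_mul_add one_ne_zero three_ne_zero 5 using 3 <;> norm_num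

lemma isEquivalent_natCast_add (c : ℝ) :
    (fun n : ℕ ↦ (n + c : ℝ)) ~[atTop] fun n ↦ (n : ℝ) :=
  IsEquivalent.refl.add_const_of_norm_tendsto_atTop
    (tendsto_norm_atTop_atTop.comp tendsto_natCast_atTop_atTop)

lemma isEquivalent_two_div_mul_choose_four_mul_add_five :
    (fun n : ℕ ↦ 2 / (((n : ℝ) + 1) * (n + 2)) * (4 * n + 5).choose n) ~[atTop]
      fun n ↦ 2 / (n * n : ℝ) * ((4 / 3) ^ 5 * (√(2 / 3) / √(π * n) * (256 / 27) ^ n)) :=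
  ((IsEquivalent.refl (u := fun _ ↦ (2 : ℝ))).div
    ((isEquivalent_natCast_add 1).mul (isEquivalent_natCast_add 2))).mul
      isEquivalent_choose_four_mul_add_five

lemma two_rpow_three_mul_logb_three_sub_six : (2 : ℝ) ^ (3 * logb 2 3 - 6) = 27 / 64 := by
  rw [rpow_sub two_pos, mul_comm, rpow_mul two_pos.le,
    rpow_logb two_pos (by norm_num) three_pos]
  norm_num

/-- With `Q n = C(2n+1, n)` the number of Quillen model structures on `[n]` and
`P n = (2 / ((n+1)(n+2))) * C(4n+5, n)` the number of premodel structures on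
`[n]`, one has `Q n / P n ~ c * 2^(d*n) * n^2` as `n → ∞`, where
`c = 243 * √(3/2) / 1024` and `d = 3 * log₂ 3 - 6`. -/
theorem model_premodel_ratio_asymptotics :
    Filter.Tendsto
      (fun n : ℕ =>
        ((Nat.choose (2 * n + 1) n : ℝ) /
            ((2 / (((n : ℝ) + 1) * ((n : ℝ) + 2))) * (Nat.choose (4 * n + 5) n : ℝ))) /
          ((243 * Real.sqrt (3 / 2) / 1024) *
            (2 : ℝ) ^ ((3 * Real.logb 2 3 - 6) * (n : ℝ)) * (n : ℝ) ^ 2))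
      Filter.atTop (nhds 1) := by
  have hQP := isEquivalent_choose_two_mul_add_one.div
    isEquivalent_two_div_mul_choose_four_mul_add_five
  refine (isEquivalent_iff_tendsto_one ?_).1 (hQP.congr_right ?_)
  all_goals filter_upwards [eventually_ne_atTop 0] with n hn
  · positivity
  have hsqrt : √(2 / 3) = (√(3 / 2))⁻¹ := by
    rw [← sqrt_inv]
    norm_num
  have hpow : (27 / 64 : ℝ) ^ n * (256 / 27) ^ n = 4 ^ n := by
    rw [← mul_pow]
    norm_num
  rw [rpow_mul_natCast two_pos.le, two_rpow_three_mul_logb_three_sub_six]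
  rw [Pi.div_apply, hsqrt, ← hpow]
  field_simp
  norm_num
end

section
/- For every n : ℕ, the number of binary relations W on Fin (n+1) such that (i) W x y implies x ≤ y, (ii) W x x holds for every x, and (iii) for all x ≤ y ≤ z, W x z holds if and only if both W x y and W y z hold, is exactly 2^n. (These relations are precisely the possible classes of weak equivalences of model structures on [n]: composition-closed, decomposable classes, which are in bijection with the interval partitions of [n].) -/
/-! The interval from `x` to `y` is covered by steps `a < succ a`, so composing and decomposing
along these steps shows that `W` is determined by the steps it contains. Conversely any set of
steps may be prescribed, because for `x ≤ y ≤ z` the steps from `x` to `z` split into those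
from `x` to `y` and those from `y` to `z`. On `Fin (n + 1)` there are `n` steps. -/

open Cardinal Order Set

universe u

section WeakEquivalencePatterns

variable {α : Type u}

/-- The combinatorial properties of a class of weak equivalences on a poset, seen as a category:
a morphism `x ⟶ y` is a pair `x ≤ y`, and `W x y` says that it is a weak equivalence. The
last clause is closure under composition together with decomposability. -/
def IsWeakEquivalencePattern [LE α] (W : α → α → Prop) : Prop :=
  (∀ x y, W x y → x ≤ y) ∧ (∀ x, W x x) ∧
    (∀ x y z, x ≤ y → y ≤ z → (W x z ↔ W x y ∧ W y z))

/-- The relation generated by a set of steps: a step `a < succ a` is encoded by its source `a`,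
so `x` is related to `y` when all steps between them lie in `S`. -/
def relOfSteps [Preorder α] (S : Set α) (x y : α) : Prop :=
  x ≤ y ∧ Ico x y ⊆ S

/-- The steps `a < succ a` contained in `W`, encoded by their sources. Maximal elements are
excluded because `succ a = a` there. -/
def stepsOfRel [Preorder α] [SuccOrder α] (W : α → α → Prop) : Set α :=
  {a | ¬IsMax a ∧ W a (succ a)}

variable [PartialOrder α]

theorem setOf_not_isMax_eq_compl_top [OrderTop α] : {a : α | ¬IsMax a} = {⊤}ᶜ := by
  ext a
  simp [isMax_iff_eq_top]

theorem mk_setOf_not_isMax_add_one [OrderTop α] : #{a : α | ¬IsMax a} + 1 = #α := by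
  rw [setOf_not_isMax_eq_compl_top, add_comm, ← mk_singleton (⊤ : α), mk_sum_compl]

variable [SuccOrder α]

theorem stepsOfRel_relOfSteps (S : Set α) :
    stepsOfRel (relOfSteps S) = {a | ¬IsMax a} ∩ S := by
  ext a
  refine and_congr_right fun ha => ?_
  rw [relOfSteps, (covBy_succ_of_not_isMax ha).Ico_eq, singleton_subset_iff]
  exact and_iff_right (le_succ a)

variable [IsSuccArchimedean α] {x y z : α}

theorem Ico_union_Ico_of_isSuccArchimedean (hxy : x ≤ y) (hyz : y ≤ z) :
    Ico x y ∪ Ico y z = Ico x z := by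
  refine Subset.antisymm
    (union_subset (Ico_subset_Ico_right hyz) (Ico_subset_Ico_left hxy)) fun a ha => ?_
  rcases le_total_of_codirected hxy ha.1 with hya | hay
  · exact Or.inr ⟨hya, ha.2⟩
  · rcases hay.eq_or_lt with rfl | hay
    · exact Or.inr ⟨le_rfl, ha.2⟩
    · exact Or.inl ⟨ha.1, hay⟩

theorem isWeakEquivalencePattern_relOfSteps (S : Set α) :
    IsWeakEquivalencePattern (relOfSteps S) := by
  refine ⟨fun x y h => h.1, fun x => ⟨le_rfl, by simp⟩, fun x y z hxy hyz => ?_⟩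
  simp only [relOfSteps, hxy, hyz, hxy.trans hyz, true_and, ← union_subset_iff,
    Ico_union_Ico_of_isSuccArchimedean hxy hyz]

namespace IsWeakEquivalencePattern

variable {W : α → α → Prop}

theorem rel_iff_Ico_subset_stepsOfRel (hW : IsWeakEquivalencePattern W) (hxy : x ≤ y) :
    W x y ↔ Ico x y ⊆ stepsOfRel W := by
  obtain ⟨-, hrefl, hcomp⟩ := hW
  induction hxy using Succ.rec with
  | rfl => simp [hrefl x]
  | succ y hxy ih =>
    by_cases hy : IsMax y
    · rwa [hy.succ_eq]
    · have step_iff : W y (succ y) ↔ Ico y (succ y) ⊆ stepsOfRel W := by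
        rw [(covBy_succ_of_not_isMax hy).Ico_eq, singleton_subset_iff]
        exact (and_iff_right hy).symm
      rw [hcomp x y (succ y) hxy (le_succ y), ih, step_iff, ← union_subset_iff,
        Ico_union_Ico_of_isSuccArchimedean hxy (le_succ y)]

theorem relOfSteps_stepsOfRel (hW : IsWeakEquivalencePattern W) :
    relOfSteps (stepsOfRel W) = W := by
  ext x y
  exact ⟨fun h => (hW.rel_iff_Ico_subset_stepsOfRel h.1).mpr h.2,
    fun h => ⟨hW.1 x y h, (hW.rel_iff_Ico_subset_stepsOfRel (hW.1 x y h)).mp h⟩⟩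

variable (α) in
/-- The correspondence between classes of weak equivalences and sets of steps; on `Fin (n + 1)`,
the complement of a set of steps is the set of cuts of an interval partition. -/
def equivPowerset :
    {W : α → α → Prop // IsWeakEquivalencePattern W} ≃ 𝒫 {a : α | ¬IsMax a} where
  toFun W := ⟨stepsOfRel W.1, fun _ ha => ha.1⟩
  invFun S := ⟨relOfSteps S.1, isWeakEquivalencePattern_relOfSteps S.1⟩
  left_inv W := Subtype.ext W.2.relOfSteps_stepsOfRel
  right_inv S := Subtype.ext <|
    (stepsOfRel_relOfSteps S.1).trans (inter_eq_self_of_subset_right S.2)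

end IsWeakEquivalencePattern

variable (α) in
theorem card_weak_equivalence_patterns_general :
    #{W : α → α → Prop // IsWeakEquivalencePattern W} = 2 ^ #{a : α | ¬IsMax a} :=
  (mk_congr (IsWeakEquivalencePattern.equivPowerset α)).trans (mk_powerset _)

end WeakEquivalencePatterns

theorem mk_setOf_not_isMax_fin (n : ℕ) : #{a : Fin (n + 1) | ¬IsMax a} = n := by
  simpa using mk_setOf_not_isMax_add_one (α := Fin (n + 1))

/-- The number of binary relations `W` on `Fin (n+1)` refining `≤`, reflexive,
and such that for `x ≤ y ≤ z`, `W x z` holds iff both `W x y` and `W y z` hold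
(the possible classes of weak equivalences of model structures on `[n]`), is
exactly `2^n`. -/
theorem card_weak_equivalence_patterns (n : ℕ) :
    Nat.card {W : Fin (n + 1) → Fin (n + 1) → Prop //
        (∀ x y, W x y → x ≤ y) ∧ (∀ x, W x x) ∧
        (∀ x y z, x ≤ y → y ≤ z → (W x z ↔ W x y ∧ W y z))} =
      2 ^ n := by
  refine (congrArg toNat (card_weak_equivalence_patterns_general (Fin (n + 1)))).trans ?_
  rw [mk_setOf_not_isMax_fin, power_natCast, map_pow, toNat_ofNat]
end

section
/- For every n : ℕ, the number of model structures on the category [n] in which every morphism is a fibration is exactly 2^n. -/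
universe v u

open CategoryTheory

section ModelDefs

variable {C : Type u} [Category.{v} C]

/-- `f` is a retract of `g` in the arrow category of `C`. -/
def IsRetractOfHom {X Y X' Y' : C} (f : X ⟶ Y) (g : X' ⟶ Y') : Prop :=
  ∃ (a : X ⟶ X') (b : Y ⟶ Y') (a' : X' ⟶ X) (b' : Y' ⟶ Y),
    a ≫ a' = 𝟙 X ∧ b ≫ b' = 𝟙 Y ∧ f ≫ b = a ≫ g ∧ g ≫ b' = a' ≫ f

/-- A class of morphisms is stable under retracts (in the arrow category). -/
def StableUnderRetractsHom (P : MorphismProperty C) : Prop :=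
  ∀ ⦃X Y X' Y' : C⦄ (f : X ⟶ Y) (g : X' ⟶ Y'), IsRetractOfHom f g → P g → P f

/-- A (Quillen) model structure on a category `C`: three classes of morphisms —
weak equivalences, fibrations, cofibrations — each closed under composition and
retracts, the weak equivalences satisfying two-out-of-three, cofibrations
(resp. acyclic cofibrations) having the left lifting property against acyclic
fibrations (resp. fibrations), and every morphism factoring as a cofibration
followed by an acyclic fibration and as an acyclic cofibration followed by a
fibration. A model category is a category with all finite limits and colimits
equipped with such a structure. -/
structure ModelStructure (C : Type u) [Category.{v} C] where
  weq : MorphismProperty C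
  fib : MorphismProperty C
  cof : MorphismProperty C
  weq_comp : weq.IsStableUnderComposition
  fib_comp : fib.IsStableUnderComposition
  cof_comp : cof.IsStableUnderComposition
  weq_retract : StableUnderRetractsHom weq
  fib_retract : StableUnderRetractsHom fib
  cof_retract : StableUnderRetractsHom cof
  weq_two_out_of_three : weq.HasTwoOutOfThreeProperty
  lift_cof_trivFib : ∀ ⦃A B X Y : C⦄ (i : A ⟶ B) (p : X ⟶ Y),
    cof i → fib p → weq p → HasLiftingProperty i p
  lift_trivCof_fib : ∀ ⦃A B X Y : C⦄ (i : A ⟶ B) (p : X ⟶ Y),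
    cof i → weq i → fib p → HasLiftingProperty i p
  factor_cof_trivFib : ∀ ⦃X Y : C⦄ (f : X ⟶ Y),
    ∃ (Z : C) (i : X ⟶ Z) (p : Z ⟶ Y), cof i ∧ fib p ∧ weq p ∧ i ≫ p = f
  factor_trivCof_fib : ∀ ⦃X Y : C⦄ (f : X ⟶ Y),
    ∃ (Z : C) (i : X ⟶ Z) (p : Z ⟶ Y), cof i ∧ weq i ∧ fib p ∧ i ≫ p = f

end ModelDefs

/-!
If every morphism of a partial order `P` with least element `⊥` is a fibration, then `x ≤ y` is a
weak equivalence exactly when `x` and `y` have the same cofibrant replacement, and cofibrant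
replacement is an interior operator, i.e. a closure operator on `Pᵒᵈ`. Conversely, if `P` has
binary joins, the morphisms inverted by an interior operator `q` are the right class of a weak
factorization system, since `x ≤ y` factors through `x ⊔ q y`. On a finite linear order the
interior operators correspond to the sets containing `⊥`.
-/

open CategoryTheory.MorphismProperty OrderDual

section ClosureOperator

lemma closure_eq_of_le_of_le_closure {α : Type*} [PartialOrder α] (c : ClosureOperator α) {x y : α}
    (hxy : x ≤ y) (hyx : y ≤ c x) : c x = c y :=
  (c.monotone hxy).antisymm (c.le_closure_iff.1 hyx)

/-- On a well-founded linear order with a top element every set containing `⊤` is the set of closed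
elements of a unique closure operator, which sends `x` to the least element of the set above `x`. -/
noncomputable def closureOperatorEquivTopMem (α : Type*) [LinearOrder α] [OrderTop α]
    [WellFoundedLT α] : ClosureOperator α ≃ {s : Set α // ⊤ ∈ s} where
  toFun c := ⟨{x | c.IsClosed x}, c.isClosed_iff.2 c.closure_top⟩
  invFun s :=
    have above (x : α) : (s.1 ∩ Set.Ici x).Nonempty := ⟨⊤, s.2, le_top⟩
    .ofPred (fun x ↦ wellFounded_lt.min _ (above x)) (· ∈ s.1)
      (fun x ↦ (wellFounded_lt.min_mem _ (above x)).2)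
      (fun x ↦ (wellFounded_lt.min_mem _ (above x)).1)
      (fun x _ hxy hy ↦ wellFounded_lt.min_le (s := s.1 ∩ Set.Ici x) ⟨hy, hxy⟩)
  left_inv _ := ClosureOperator.ext_isClosed _ _ fun _ ↦ Iff.rfl
  right_inv _ := rfl

lemma card_set_mem {α : Type*} [Finite α] (a : α) :
    Nat.card {s : Set α // a ∈ s} = 2 ^ (Nat.card α - 1) := by
  have e : {s : Set α // a ∈ s} ≃ 𝒫 ({a}ᶜ : Set α) :=
    compl_involutive.toPerm.subtypeEquiv fun s ↦ by simp
  rw [Nat.card_congr e, Nat.card_coe_set_eq, Set.ncard_powerset, Set.ncard_compl,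
    Set.ncard_singleton]

lemma card_closureOperator (α : Type*) [LinearOrder α] [OrderTop α] [Finite α] :
    Nat.card (ClosureOperator α) = 2 ^ (Nat.card α - 1) := by
  rw [Nat.card_congr (closureOperatorEquivTopMem α), card_set_mem]

end ClosureOperator

lemma stableUnderRetractsHom_iff {C : Type u} [Category.{v} C] (W : MorphismProperty C) :
    StableUnderRetractsHom W ↔ W.IsStableUnderRetracts where
  mp h := ⟨fun r hg ↦ h _ _ ⟨r.i.left, r.i.right, r.r.left, r.r.right, r.retract_left,
    r.retract_right, r.i_w.symm, r.r_w.symm⟩ hg⟩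
  mpr _ X Y X' Y' f g := fun ⟨a, b, a', b', ha, hb, hi, hr⟩ hg ↦
    have r : RetractArrow f g :=
      ⟨Arrow.homMk a b hi.symm, Arrow.homMk a' b' hr.symm, by ext <;> simp [ha, hb]⟩
    W.of_retract r hg

lemma isIso_of_hasLiftingProperty_self {C : Type u} [Category.{v} C] {X Y : C} (f : X ⟶ Y)
    [HasLiftingProperty f f] : IsIso f :=
  have sq : CommSq (𝟙 X) f f (𝟙 Y) := ⟨by simp⟩
  ⟨sq.lift, sq.fac_left, sq.fac_right⟩

section Poset

variable {P : Type u}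

lemma hasLiftingProperty_iff_le [Preorder P] {a b x y : P} (i : a ⟶ b) (p : x ⟶ y) :
    HasLiftingProperty i p ↔ (a ≤ x → b ≤ y → b ≤ x) where
  mp _ hax hby := (CommSq.mk (Subsingleton.elim (homOfLE hax ≫ p) (i ≫ homOfLE hby))).lift.le
  mpr h := ⟨fun {f g} _ ↦
    ⟨⟨⟨homOfLE (h f.le g.le), Subsingleton.elim _ _, Subsingleton.elim _ _⟩⟩⟩⟩

lemma isStableUnderRetracts_of_partialOrder [PartialOrder P] (W : MorphismProperty P) :
    W.IsStableUnderRetracts where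
  of_retract {x y x' y' f g} r hg := by
    obtain rfl := r.i.left.le.antisymm r.r.left.le
    obtain rfl := r.i.right.le.antisymm r.r.right.le
    rwa [Subsingleton.elim f g]

/-- The morphisms of `P` inverted by an interior operator, which is encoded as a closure operator
on `Pᵒᵈ`. -/
def interiorWeq [PartialOrder P] (c : ClosureOperator Pᵒᵈ) : MorphismProperty P :=
  fun x y _ ↦ c (toDual x) = c (toDual y)

instance [PartialOrder P] (c : ClosureOperator Pᵒᵈ) :
    (interiorWeq c).HasTwoOutOfThreeProperty where
  comp_mem _ _ hf hg := Eq.trans hf hg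
  of_postcomp _ _ hg hfg := Eq.trans hfg (Eq.symm hg)
  of_precomp _ _ hf hfg := Eq.trans (Eq.symm hf) hfg

lemma isWeakFactorizationSystem_interiorWeq [SemilatticeSup P] (c : ClosureOperator Pᵒᵈ) :
    IsWeakFactorizationSystem (interiorWeq c).llp (interiorWeq c) := by
  have := isStableUnderRetracts_of_partialOrder (interiorWeq c)
  have : HasFactorization (interiorWeq c).llp (interiorWeq c) := ⟨fun {x y} f ↦ by
    have hcy : ofDual (c (toDual y)) ≤ y := c.le_closure (toDual y)
    have hzy : x ⊔ ofDual (c (toDual y)) ≤ y := sup_le f.le hcy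
    refine ⟨⟨x ⊔ ofDual (c (toDual y)), homOfLE le_sup_left, homOfLE hzy, rfl, ?_, ?_⟩⟩
    · intro u v g (hg : c (toDual u) = c (toDual v))
      refine (hasLiftingProperty_iff_le _ _).2 fun hxu hzv ↦ sup_le hxu ?_
      have hyv : c (toDual v) ≤ c (toDual y) := c.le_closure_iff.1 (le_sup_right.trans hzv)
      exact (c.le_closure (toDual u)).trans (hg.trans_le hyv)
    · exact (closure_eq_of_le_of_le_closure c hzy le_sup_right).symm⟩
  exact .mk' _ _ fun _ p hi hp ↦ hi p hp

end Poset

namespace ModelStructure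

section Category

variable {C : Type u} [Category.{v} C]

lemma isWeakFactorizationSystem_cof_trivFib (M : ModelStructure C) :
    IsWeakFactorizationSystem M.cof (M.fib ⊓ M.weq) :=
  have := (stableUnderRetractsHom_iff _).1 M.cof_retract
  have := (stableUnderRetractsHom_iff _).1 M.fib_retract
  have := (stableUnderRetractsHom_iff _).1 M.weq_retract
  have : HasFactorization M.cof (M.fib ⊓ M.weq) := ⟨fun f ↦
    let ⟨_, i, p, hi, hp, hp', fac⟩ := M.factor_cof_trivFib f
    ⟨⟨_, i, p, fac, hi, hp, hp'⟩⟩⟩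
  .mk' _ _ fun i p hi hp ↦ M.lift_cof_trivFib i p hi hp.1 hp.2

lemma ext_fib_weq {M N : ModelStructure C} (hfib : M.fib = N.fib) (hweq : M.weq = N.weq) :
    M = N := by
  have hcof : M.cof = N.cof := by
    rw [← M.isWeakFactorizationSystem_cof_trivFib.llp, hfib, hweq,
      N.isWeakFactorizationSystem_cof_trivFib.llp]
  cases M
  cases N
  congr

/-- The model structure in which every morphism is a fibration and whose cofibrations and weak
equivalences form a given weak factorization system; its acyclic cofibrations are the
isomorphisms. -/
def ofWeakFactorizationSystem (L W : MorphismProperty C) [IsWeakFactorizationSystem L W]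
    [W.HasTwoOutOfThreeProperty] : ModelStructure C where
  weq := W
  fib := ⊤
  cof := L
  weq_comp := inferInstance
  fib_comp := inferInstance
  cof_comp := llp_eq_of_wfs L W ▸ inferInstance
  weq_retract := (stableUnderRetractsHom_iff W).2 (rlp_eq_of_wfs L W ▸ inferInstance)
  fib_retract _ _ _ _ _ _ _ _ := trivial
  cof_retract := (stableUnderRetractsHom_iff L).2 (llp_eq_of_wfs L W ▸ inferInstance)
  weq_two_out_of_three := inferInstance
  lift_cof_trivFib _ _ _ _ i p hi _ hp := hasLiftingProperty_of_wfs i p hi hp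
  lift_trivCof_fib _ _ _ _ i _ hi hi' _ :=
    have := hasLiftingProperty_of_wfs i i hi hi'
    have := isIso_of_hasLiftingProperty_self i
    inferInstance
  factor_cof_trivFib _ _ f :=
    have d := factorizationData L W f
    ⟨d.Z, d.i, d.p, d.hi, trivial, d.hp, d.fac⟩
  factor_trivCof_fib X _ f :=
    ⟨X, 𝟙 X, f, llp_eq_of_wfs L W ▸ llp_of_isIso _ _, rlp_eq_of_wfs L W ▸ rlp_of_isIso _ _,
      trivial, Category.id_comp f⟩

end Category

section PartialOrder

variable {P : Type u} [PartialOrder P] [OrderBot P]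

/-- An element is cofibrant if the morphism to it from the initial object `⊥` is a cofibration. -/
def IsCofibrant (M : ModelStructure P) (x : P) : Prop :=
  M.cof (homOfLE (bot_le : ⊥ ≤ x))

lemma IsCofibrant.le_of_trivFib {M : ModelStructure P} {x y z : P} (hz : M.IsCofibrant z)
    (p : x ⟶ y) (hp : M.fib p) (hp' : M.weq p) (hzy : z ≤ y) : z ≤ x :=
  (hasLiftingProperty_iff_le _ _).1 (M.lift_cof_trivFib _ p hz hp hp') bot_le hzy

lemma exists_isCofibrant_trivFib (M : ModelStructure P) (x : P) :
    ∃ z, M.IsCofibrant z ∧ ∃ p : z ⟶ x, M.fib p ∧ M.weq p :=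
  let ⟨z, _, p, hi, hp, hp', _⟩ := M.factor_cof_trivFib (homOfLE (bot_le : ⊥ ≤ x))
  ⟨z, hi, p, hp, hp'⟩

/-- Cofibrant replacement in a partial order sends `x` to the greatest cofibrant element below `x`.
It is an interior operator, encoded as a closure operator on `Pᵒᵈ`. -/
noncomputable def cofibrantReplacement (M : ModelStructure P) : ClosureOperator Pᵒᵈ :=
  have spec (x : P) := (M.exists_isCofibrant_trivFib x).choose_spec
  .ofPred (fun x ↦ toDual (M.exists_isCofibrant_trivFib (ofDual x)).choose)
    (fun x ↦ M.IsCofibrant (ofDual x))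
    (fun x ↦ (spec (ofDual x)).2.choose.le)
    (fun x ↦ (spec (ofDual x)).1)
    (fun x _ hzx hz ↦
      have ⟨p, hp, hp'⟩ := (spec (ofDual x)).2
      hz.le_of_trivFib p hp hp' hzx)

lemma exists_weq_cofibrantReplacement (M : ModelStructure P) (x : P) :
    ∃ p : ofDual (M.cofibrantReplacement (toDual x)) ⟶ x, M.weq p :=
  have ⟨p, _, hp⟩ := (M.exists_isCofibrant_trivFib x).choose_spec.2
  ⟨p, hp⟩

lemma weq_eq_interiorWeq_cofibrantReplacement {M : ModelStructure P}
    (hM : ∀ ⦃x y : P⦄ (f : x ⟶ y), M.fib f) : M.weq = interiorWeq M.cofibrantReplacement := by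
  ext x y f
  constructor
  · intro hf
    have hy : M.IsCofibrant (ofDual (M.cofibrantReplacement (toDual y))) :=
      M.cofibrantReplacement.isClosed_closure (toDual y)
    have hyx : ofDual (M.cofibrantReplacement (toDual y)) ≤ x :=
      hy.le_of_trivFib f (hM f) hf (M.cofibrantReplacement.le_closure (toDual y))
    exact (closure_eq_of_le_of_le_closure M.cofibrantReplacement f.le hyx).symm
  · intro (hxy : M.cofibrantReplacement (toDual x) = M.cofibrantReplacement (toDual y))
    have := M.weq_two_out_of_three
    obtain ⟨p, hp⟩ := M.exists_weq_cofibrantReplacement x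
    have hy := M.exists_weq_cofibrantReplacement y
    rw [← hxy] at hy
    obtain ⟨q, hq⟩ := hy
    exact M.weq.of_precomp p f hp (Subsingleton.elim q (p ≫ f) ▸ hq)

end PartialOrder

section SemilatticeSup

variable {P : Type u} [SemilatticeSup P]

/-- The model structure in which every morphism is a fibration and whose weak equivalences are the
morphisms inverted by a given interior operator. -/
def ofInterior (c : ClosureOperator Pᵒᵈ) : ModelStructure P :=
  have := isWeakFactorizationSystem_interiorWeq c
  ofWeakFactorizationSystem (interiorWeq c).llp (interiorWeq c)

variable [OrderBot P]

lemma isCofibrant_ofInterior_iff {c : ClosureOperator Pᵒᵈ} {x : P} :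
    (ofInterior c).IsCofibrant x ↔ c.IsClosed (toDual x) := by
  have hcx : ofDual (c (toDual x)) ≤ x := c.le_closure (toDual x)
  constructor
  · intro hx
    exact c.isClosed_iff_closure_le.2
      (hx.le_of_trivFib (homOfLE hcx) trivial (c.idempotent (toDual x)) le_rfl)
  · intro hx u v p (hp : c (toDual u) = c (toDual v))
    refine (hasLiftingProperty_iff_le _ _).2 fun _ hxv ↦ ?_
    have hvx : c (toDual v) ≤ toDual x := c.closure_min hxv hx
    exact (c.le_closure (toDual u)).trans (hp.trans_le hvx)

/-- The model structures on `P` in which every morphism is a fibration correspond to the interior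
operators on `P`, by cofibrant replacement. -/
noncomputable def allFibrationsEquiv (P : Type u) [SemilatticeSup P] [OrderBot P] :
    {M : ModelStructure P // ∀ ⦃x y : P⦄ (f : x ⟶ y), M.fib f} ≃ ClosureOperator Pᵒᵈ where
  toFun M := M.1.cofibrantReplacement
  invFun c := ⟨ofInterior c, fun _ _ _ ↦ trivial⟩
  left_inv M := by
    refine Subtype.ext (ext_fib_weq ?_ (weq_eq_interiorWeq_cofibrantReplacement M.2).symm)
    ext x y f
    exact ⟨fun _ ↦ M.2 f, fun _ ↦ trivial⟩
  right_inv _ := ClosureOperator.ext_isClosed _ _ fun _ ↦ isCofibrant_ofInterior_iff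

end SemilatticeSup

end ModelStructure

/-- The number of model structures on `[n]` in which every morphism is a
fibration is exactly `2^n`. -/
theorem card_model_structures_all_fibrations (n : ℕ) :
    Nat.card {M : ModelStructure (Fin (n + 1)) //
        ∀ ⦃x y : Fin (n + 1)⦄ (f : x ⟶ y), M.fib f} =
      2 ^ n := by
  rw [Nat.card_congr (ModelStructure.allFibrationsEquiv (Fin (n + 1))), card_closureOperator]
  simp
end
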